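/- The subspace of W_{k₁,k₂} of vectors fixed by every element of ℤ² is zero if k₁ + k₂ is odd, and is one-dimensional, spanned by the monomial X^{k₁} ⊗ X^{k₂}, if k₁ + k₂ is even. -/

import Mathlib

noncomputable section

open MvPolynomial Matrix

/-- `V k`: the space of homogeneous polynomials of degree `k` in two variables `X = X 0`,
`Y = X 1`. -/
abbrev Vhom (k : ℕ) : Submodule ℂ (MvPolynomial (Fin 2) ℂ) :=
  homogeneousSubmodule (Fin 2) ℂ k

/-- Substitution of the variables by the linear forms determined by the *transpose* of `A`,
i.e. `X_i ↦ ∑ j, A j i • X j`; this is `P ↦ P ∘ Aᵗ`. -/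
def substMap (A : Matrix (Fin 2) (Fin 2) ℂ) :
    MvPolynomial (Fin 2) ℂ →ₐ[ℂ] MvPolynomial (Fin 2) ℂ :=
  aeval fun i => ∑ j : Fin 2, C (A j i) * X j

lemma substMap_isHomogeneous (A : Matrix (Fin 2) (Fin 2) ℂ) {k : ℕ}
    {p : MvPolynomial (Fin 2) ℂ} (hp : p.IsHomogeneous k) :
    (substMap A p).IsHomogeneous k := by
  have hg : ∀ i : Fin 2, ((fun i : Fin 2 => ∑ j : Fin 2, C (A j i) * X j) i).IsHomogeneous 1 := by
    intro i
    apply MvPolynomial.IsHomogeneous.sum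
    intro j _
    simpa using (MvPolynomial.isHomogeneous_X ℂ j).C_mul (A j i)
  rw [substMap]
  simpa using hp.aeval _ hg

/-- The representation `Sym^k` of `SL(2,ℂ)` on the space `Vhom k` of homogeneous polynomials of
degree `k`: the action of `A` is `P ↦ P ∘ Aᵗ`. -/
def SymSL (k : ℕ) (A : Matrix.SpecialLinearGroup (Fin 2) ℂ) : Vhom k →ₗ[ℂ] Vhom k :=
  ((substMap A.1).toLinearMap).restrict fun _p hp =>
    (MvPolynomial.mem_homogeneousSubmodule _ _).2
      (substMap_isHomogeneous A.1 ((MvPolynomial.mem_homogeneousSubmodule _ _).1 hp))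

open scoped TensorProduct

set_option synthInstance.maxHeartbeats 1000000
set_option maxHeartbeats 1000000

/-- The sign `(−1)^{ε(n₁,n₂)}`. -/
def sgn (ε : (ℤ × ℤ) →+ ZMod 2) (n : ℤ × ℤ) : ℂ := if ε n = 0 then 1 else -1

lemma rhoMat_det (cs : ℂ) (ε : (ℤ × ℤ) →+ ZMod 2) (n : ℤ × ℤ) :
    Matrix.det (sgn ε n • !![1, (n.1 : ℂ) + (n.2 : ℂ) * cs; 0, 1]) = 1 := by
  rw [Matrix.det_smul, Matrix.det_fin_two_of]
  rcases (show sgn ε n = 1 ∨ sgn ε n = -1 by unfold sgn; split_ifs <;> simp) with h | h <;>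
    rw [h] <;> norm_num

/-- The representation `ρ : ℤ² → SL₂(ℂ)`,
`ρ(n₁,n₂) = (−1)^{ε(n₁,n₂)} [[1, n₁ + n₂·cs],[0,1]]`. -/
def rhoSL (cs : ℂ) (ε : (ℤ × ℤ) →+ ZMod 2) (n : ℤ × ℤ) :
    Matrix.SpecialLinearGroup (Fin 2) ℂ :=
  ⟨sgn ε n • !![1, (n.1 : ℂ) + (n.2 : ℂ) * cs; 0, 1], rhoMat_det cs ε n⟩

/-- The entrywise complex conjugate `ρ̄` of `ρ`. -/
def rhoConjSL (cs : ℂ) (ε : (ℤ × ℤ) →+ ZMod 2) (n : ℤ × ℤ) :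
    Matrix.SpecialLinearGroup (Fin 2) ℂ :=
  Matrix.SpecialLinearGroup.map (starRingEnd ℂ) (rhoSL cs ε n)

/-- The action of `(n₁,n₂) ∈ ℤ²` on `W_{k₁,k₂} = V_{k₁} ⊗ V_{k₂}` by
`Sym^{k₁}(ρ(n₁,n₂)) ⊗ Sym^{k₂}(ρ̄(n₁,n₂))`. -/
def Wact (k₁ k₂ : ℕ) (cs : ℂ) (ε : (ℤ × ℤ) →+ ZMod 2) (n : ℤ × ℤ) :
    (Vhom k₁ ⊗[ℂ] Vhom k₂) →ₗ[ℂ] (Vhom k₁ ⊗[ℂ] Vhom k₂) :=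
  TensorProduct.map (SymSL k₁ (rhoSL cs ε n)) (SymSL k₂ (rhoConjSL cs ε n))

/-- The subspace of `W_{k₁,k₂}` of vectors fixed by every element of `ℤ²`. -/
def Wfixed (k₁ k₂ : ℕ) (cs : ℂ) (ε : (ℤ × ℤ) →+ ZMod 2) :
    Submodule ℂ (Vhom k₁ ⊗[ℂ] Vhom k₂) where
  carrier := {w | ∀ n : ℤ × ℤ, Wact k₁ k₂ cs ε n w = w}
  add_mem' := fun ha hb n => by rw [map_add, ha n, hb n]
  zero_mem' := fun n => map_zero _
  smul_mem' := fun c w hw n => by rw [_root_.map_smul, hw n]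

/-- The monomial `X^{k₁} ⊗ X^{k₂} ∈ V_{k₁} ⊗ V_{k₂}`. -/
def Wmonomial (k₁ k₂ : ℕ) : Vhom k₁ ⊗[ℂ] Vhom k₂ :=
  (⟨(X 0 : MvPolynomial (Fin 2) ℂ) ^ k₁,
      (MvPolynomial.mem_homogeneousSubmodule _ _).2
        (by simpa using (MvPolynomial.isHomogeneous_X ℂ (0 : Fin 2)).pow k₁)⟩ : Vhom k₁) ⊗ₜ[ℂ]
    (⟨(X 0 : MvPolynomial (Fin 2) ℂ) ^ k₂,
      (MvPolynomial.mem_homogeneousSubmodule _ _).2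
        (by simpa using (MvPolynomial.isHomogeneous_X ℂ (0 : Fin 2)).pow k₂)⟩ : Vhom k₂)

lemma eval_smul_hom {k : ℕ} {p : MvPolynomial (Fin 2) ℂ} (hp : p.IsHomogeneous k)
    (c : ℂ) (x : Fin 2 → ℂ) : eval (fun i => c * x i) p = c ^ k * eval x p := by
  rw [eval_eq, eval_eq, Finset.mul_sum]
  refine Finset.sum_congr rfl fun d hd => ?_
  have h := hp.coeff_eq_zero (d := d)
  have hdeg : d.degree = k := by
    by_contra hne
    exact (mem_support_iff.1 hd) (h hne)
  have h2 : ∏ i ∈ d.support, c ^ d i = c ^ k := by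
    rw [Finset.prod_pow_eq_pow_sum, ← hdeg]
    rfl
  simp only [mul_pow, Finset.prod_mul_distrib]
  rw [h2]
  ring

/-- Evaluation at `(1, s)`. -/
def evl (k : ℕ) (s : ℂ) : Vhom k →ₗ[ℂ] ℂ :=
  (aeval ![1, s] : MvPolynomial (Fin 2) ℂ →ₐ[ℂ] ℂ).toLinearMap ∘ₗ (Vhom k).subtype

lemma evl_apply (k : ℕ) (s : ℂ) (p : Vhom k) : evl k s p = eval ![1, s] p.1 := by
  simp [evl, aeval_eq_eval]

lemma evl_inj (k : ℕ) (p : Vhom k) (h : ∀ s, evl k s p = 0) : p = 0 := by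
  have hp : p.1.IsHomogeneous k := (mem_homogeneousSubmodule _ _).1 p.2
  have h0 : (X 0 : MvPolynomial (Fin 2) ℂ) * p.1 = 0 := by
    apply MvPolynomial.funext
    intro x
    rw [map_mul, eval_X, map_zero]
    by_cases hx : x 0 = 0
    · rw [hx, zero_mul]
    · have h1 := eval_smul_hom hp (x 0) ![1, x 1 / x 0]
      have h2 : (fun i => x 0 * (![1, x 1 / x 0] : Fin 2 → ℂ) i) = x := by
        funext i
        fin_cases i
        · simp
        · simp; field_simp
      rw [h2, ← evl_apply, h, mul_zero] at h1
      rw [h1, mul_zero]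
  apply Subtype.ext
  exact (mul_eq_zero.1 h0).resolve_left (X_ne_zero 0)

/-- Evaluation at `((1, s), (1, u))`. -/
def evW (k₁ k₂ : ℕ) (s u : ℂ) : (Vhom k₁ ⊗[ℂ] Vhom k₂) →ₗ[ℂ] ℂ :=
  LinearMap.mul' ℂ ℂ ∘ₗ TensorProduct.map (evl k₁ s) (evl k₂ u)

lemma evW_tmul (k₁ k₂ : ℕ) (s u : ℂ) (p : Vhom k₁) (q : Vhom k₂) :
    evW k₁ k₂ s u (p ⊗ₜ q) = evl k₁ s p * evl k₂ u q := by
  simp [evW]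

lemma evW_inj (k₁ k₂ : ℕ) (w : Vhom k₁ ⊗[ℂ] Vhom k₂) (h : ∀ s u, evW k₁ k₂ s u w = 0) :
    w = 0 := by
  let B := Module.Free.chooseBasis ℂ (Vhom k₂)
  obtain ⟨b, rfl⟩ := TensorProduct.eq_repr_basis_right B w
  have hb : ∀ i ∈ b.support, b i = 0 := by
    intro i hi
    apply evl_inj
    intro s
    have h1 : ∑ j ∈ b.support, evl k₁ s (b j) • B j = 0 := by
      apply evl_inj
      intro u
      have := h s u
      rw [Finsupp.sum, map_sum] at this
      rw [map_sum, ← this]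
      refine Finset.sum_congr rfl fun j _ => ?_
      rw [evW_tmul, _root_.map_smul, smul_eq_mul]
    exact (linearIndependent_iff'.1 B.linearIndependent) _ _ h1 i hi
  rw [Finsupp.sum]
  refine Finset.sum_eq_zero fun i hi => ?_
  rw [hb i hi, TensorProduct.zero_tmul]

lemma evl_SymSL (k : ℕ) (s σ t : ℂ) (A : Matrix.SpecialLinearGroup (Fin 2) ℂ)
    (hA : A.1 = σ • !![1, t; 0, 1]) (p : Vhom k) :
    evl k s (SymSL k A p) = σ ^ k * evl k (s + t) p := by
  have hp : p.1.IsHomogeneous k := (mem_homogeneousSubmodule _ _).1 p.2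
  rw [evl_apply, evl_apply, ← eval_smul_hom hp]
  have h1 : (SymSL k A p).1 = substMap A.1 p.1 := rfl
  rw [h1, substMap, ← aeval_eq_eval, ← aeval_eq_eval,
    ← AlgHom.comp_apply, comp_aeval]
  congr 2
  funext i
  fin_cases i
  · simp [hA]
  · simp [hA]; ring

lemma rhoConj_val (cs : ℂ) (ε : (ℤ × ℤ) →+ ZMod 2) (n : ℤ × ℤ) :
    (rhoConjSL cs ε n).1 =
      sgn ε n • !![1, (n.1 : ℂ) + (n.2 : ℂ) * (starRingEnd ℂ) cs; 0, 1] := by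
  have hs : (starRingEnd ℂ) (sgn ε n) = sgn ε n := by
    unfold sgn; split_ifs <;> simp
  ext i j
  have h : (rhoConjSL cs ε n).1 i j = (starRingEnd ℂ)
      ((sgn ε n • !![1, (n.1 : ℂ) + (n.2 : ℂ) * cs; 0, 1] : Matrix (Fin 2) (Fin 2) ℂ) i j) := rfl
  rw [h]
  fin_cases i <;> fin_cases j <;> simp [hs]

lemma evW_Wact (k₁ k₂ : ℕ) (cs : ℂ) (ε : (ℤ × ℤ) →+ ZMod 2) (n : ℤ × ℤ) (s u : ℂ)
    (w : Vhom k₁ ⊗[ℂ] Vhom k₂) :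
    evW k₁ k₂ s u (Wact k₁ k₂ cs ε n w) = sgn ε n ^ (k₁ + k₂) *
      evW k₁ k₂ (s + (n.1 + n.2 * cs)) (u + (n.1 + n.2 * (starRingEnd ℂ) cs)) w := by
  induction w using TensorProduct.induction_on with
  | zero => simp
  | tmul p q =>
    rw [Wact, TensorProduct.map_tmul, evW_tmul, evW_tmul, evl_SymSL k₁ s _ _ _ rfl,
      evl_SymSL k₂ u _ _ _ (rhoConj_val cs ε n)]
    ring
  | add x y hx hy => rw [map_add, map_add, map_add, hx, hy, mul_add]

lemma evW_poly (k₁ k₂ : ℕ) (w : Vhom k₁ ⊗[ℂ] Vhom k₂) :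
    ∃ F : MvPolynomial (Fin 2) ℂ, ∀ s u, evW k₁ k₂ s u w = eval ![s, u] F := by
  induction w using TensorProduct.induction_on with
  | zero => exact ⟨0, by simp⟩
  | tmul p q =>
    refine ⟨bind₁ ![1, X 0] p.1 * bind₁ ![1, X 1] q.1, fun s u => ?_⟩
    rw [evW_tmul, evl_apply, evl_apply, map_mul]
    congr 1
    · rw [← aeval_eq_eval, ← aeval_eq_eval, aeval_bind₁]
      congr 2
      funext i
      fin_cases i <;> simp
    · rw [← aeval_eq_eval, ← aeval_eq_eval, aeval_bind₁]
      congr 2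
      funext i
      fin_cases i <;> simp
  | add x y hx hy =>
    obtain ⟨F, hF⟩ := hx
    obtain ⟨G, hG⟩ := hy
    exact ⟨F + G, fun s u => by rw [map_add, map_add, hF, hG]⟩

lemma evW_Wmonomial (k₁ k₂ : ℕ) (s u : ℂ) : evW k₁ k₂ s u (Wmonomial k₁ k₂) = 1 := by
  rw [Wmonomial, evW_tmul, evl_apply, evl_apply]
  simp

lemma sgn_two (ε : (ℤ × ℤ) →+ ZMod 2) (n : ℤ × ℤ) : sgn ε (n + n) = 1 := by
  rw [sgn, map_add, CharTwo.add_self_eq_zero, if_pos rfl]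

lemma evW_const (k₁ k₂ : ℕ) (cs : ℂ) (hcs : cs ∉ Set.range ((↑) : ℝ → ℂ))
    (ε : (ℤ × ℤ) →+ ZMod 2) (w : Vhom k₁ ⊗[ℂ] Vhom k₂) (hw : w ∈ Wfixed k₁ k₂ cs ε) (s u : ℂ) :
    evW k₁ k₂ s u w = evW k₁ k₂ 0 0 w := by
  obtain ⟨F, hF⟩ := evW_poly k₁ k₂ w
  set cb := (starRingEnd ℂ) cs with hcb
  have hne : cs - cb ≠ 0 := by
    intro h
    apply hcs
    exact ⟨cs.re, Complex.conj_eq_iff_re.1 (sub_eq_zero.1 h).symm⟩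
  let G : MvPolynomial (Fin 2) ℂ :=
    bind₁ ![C 2 * X 0 + C (2 * cs) * X 1, C 2 * X 0 + C (2 * cb) * X 1] F
  have hG : ∀ a b : ℂ, eval ![a, b] G =
      evW k₁ k₂ (2 * a + 2 * cs * b) (2 * a + 2 * cb * b) w := by
    intro a b
    rw [hF]
    simp only [G]
    rw [← aeval_eq_eval, ← aeval_eq_eval, aeval_bind₁]
    congr 2
    funext i
    fin_cases i <;> simp
  have hGc : G = C (evW k₁ k₂ 0 0 w) := by
    refine MvPolynomial.funext_set (fun _ => Set.range ((↑) : ℤ → ℂ))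
      (fun _ => Set.infinite_range_of_injective Int.cast_injective) fun x hx => ?_
    obtain ⟨a, ha⟩ := hx 0 trivial
    obtain ⟨b, hb⟩ := hx 1 trivial
    have hx' : x = ![(a : ℂ), (b : ℂ)] := by
      funext i
      fin_cases i
      · exact ha.symm
      · exact hb.symm
    rw [hx', hG, eval_C]
    have h1 := evW_Wact k₁ k₂ cs ε ((a, b) + (a, b)) 0 0 w
    rw [hw, sgn_two, one_pow, one_mul] at h1
    rw [h1]
    congr 2 <;> simp <;> ring
  have h2 := hG (s / 2 - (s - u) / (2 * (cs - cb)) * cs) ((s - u) / (2 * (cs - cb)))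
  rw [hGc, eval_C] at h2
  rw [h2]
  congr 2
  · ring
  · field_simp
    ring

lemma fixed_eq_smul (k₁ k₂ : ℕ) (cs : ℂ) (hcs : cs ∉ Set.range ((↑) : ℝ → ℂ))
    (ε : (ℤ × ℤ) →+ ZMod 2) (w : Vhom k₁ ⊗[ℂ] Vhom k₂) (hw : w ∈ Wfixed k₁ k₂ cs ε) :
    w = evW k₁ k₂ 0 0 w • Wmonomial k₁ k₂ := by
  rw [← sub_eq_zero]
  apply evW_inj
  intro s u
  rw [map_sub, _root_.map_smul, evW_Wmonomial, evW_const k₁ k₂ cs hcs ε w hw s u]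
  simp

/-- The subspace of `W_{k₁,k₂}` of vectors fixed by every element of `ℤ²` is
zero if `k₁ + k₂` is odd, and is one-dimensional, spanned by the monomial `X^{k₁} ⊗ X^{k₂}`,
if `k₁ + k₂` is even. -/
theorem Wfixed_eq_bot_or_span (k₁ k₂ : ℕ) (cs : ℂ)
    (hcs : cs ∉ Set.range ((↑) : ℝ → ℂ)) (ε : (ℤ × ℤ) →+ ZMod 2)
    (hε : Function.Surjective ε) :
    (Odd (k₁ + k₂) → Wfixed k₁ k₂ cs ε = ⊥) ∧
    (Even (k₁ + k₂) →
      Wfixed k₁ k₂ cs ε = Submodule.span ℂ {Wmonomial k₁ k₂} ∧ Wmonomial k₁ k₂ ≠ 0) := by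
  constructor
  · intro hodd
    rw [eq_bot_iff]
    intro w hw
    rw [Submodule.mem_bot, fixed_eq_smul k₁ k₂ cs hcs ε w hw]
    obtain ⟨n, hn⟩ := hε 1
    have hs : sgn ε n = -1 := by
      rw [sgn, hn, if_neg (by decide)]
    have h1 := evW_Wact k₁ k₂ cs ε n 0 0 w
    rw [hw, hs, hodd.neg_one_pow, evW_const k₁ k₂ cs hcs ε w hw (0 + _)] at h1
    have h2 : evW k₁ k₂ 0 0 w = 0 := by linear_combination (1 / 2) * h1
    rw [h2, zero_smul]
  · intro heven
    refine ⟨le_antisymm ?_ ?_, ?_⟩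
    · intro w hw
      rw [fixed_eq_smul k₁ k₂ cs hcs ε w hw]
      exact Submodule.smul_mem _ _ (Submodule.mem_span_singleton_self _)
    · rw [Submodule.span_singleton_le_iff_mem]
      intro n
      rw [← sub_eq_zero]
      apply evW_inj
      intro s u
      have hs : sgn ε n ^ (k₁ + k₂) = 1 := by
        unfold sgn
        split_ifs
        · exact one_pow _
        · exact heven.neg_one_pow
      rw [map_sub, evW_Wact, hs, evW_Wmonomial, evW_Wmonomial]
      ring
    · intro h
      have := evW_Wmonomial k₁ k₂ 0 0
      rw [h, map_zero] at this
      exact zero_ne_one this
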